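/- Let M be a λ-term. If M is head-normalizable (i.e., M β-reduces in finitely many steps to a head-normal form), then there exists a rigid term a ∈ T_r(M) such that NF(a) ≠ 0. -/

import Mathlib

/-! Ordinary λ-terms, in de Bruijn notation. -/
inductive Lam : Type
  | var : ℕ → Lam
  | lam : Lam → Lam
  | app : Lam → Lam → Lam
  deriving DecidableEq

namespace Lam

/-- Shift the free indices `≥ d` up by one. -/
def lift (d : ℕ) : Lam → Lam
  | var n => if n < d then var n else var (n + 1)
  | lam M => lam (lift (d + 1) M)
  | app P Q => app (lift d P) (lift d Q)

/-- Capture-avoiding substitution of `N` for the free variable `k`. -/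
def subst : Lam → ℕ → Lam → Lam
  | var n, k, N => if n = k then N else if k < n then var (n - 1) else var n
  | lam M, k, N => lam (subst M (k + 1) (lift 0 N))
  | app P Q, k, N => app (subst P k N) (subst Q k N)

/-- Number of free occurrences of the variable `k`. -/
def count (k : ℕ) : Lam → ℕ
  | var n => if n = k then 1 else 0
  | lam M => count (k + 1) M
  | app P Q => count k P + count k Q

/-- One-step β-reduction. -/
inductive Beta : Lam → Lam → Prop
  | beta (M N : Lam) : Beta (app (lam M) N) (subst M 0 N)
  | lam {M M'} : Beta M M' → Beta (lam M) (lam M')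
  | appL {P P' Q} : Beta P P' → Beta (app P Q) (app P' Q)
  | appR {P Q Q'} : Beta Q Q' → Beta (app P Q) (app P Q')

/-- The head of the application spine is a variable, with no λ on the spine. -/
def neutral : Lam → Bool
  | var _ => true
  | lam _ => false
  | app P _ => neutral P

/-- Head-normal forms: `λx₁…λxₘ. x N₁ … Nₙ`. -/
def isHNF : Lam → Prop
  | var _ => True
  | lam M => isHNF M
  | app P _ => neutral P = true

/-- The head-reduction function `H`: contracts the head redex, identity on head-normal
forms. -/
def H : Lam → Lam
  | var n => var n
  | lam M => lam (H M)
  | app (lam P) Q => subst P 0 Q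
  | app (var n) Q => app (var n) Q
  | app (app P₁ P₂) Q => app (H (app P₁ P₂)) Q

/-- The left-parallel reduction function `L`: identity on β-normal forms, propagated to
the arguments on head-normal forms, contraction of the head redex otherwise. -/
def L : Lam → Lam
  | var n => var n
  | lam M => lam (L M)
  | app (lam P) Q => subst P 0 Q
  | app (var n) Q => app (var n) (L Q)
  | app (app P₁ P₂) Q =>
      if neutral (app P₁ P₂) then app (L (app P₁ P₂)) (L Q)
      else app (L (app P₁ P₂)) Q

/-- Iterated application `M N₁ … Nₙ`. -/
def mkApps (M : Lam) (Ns : List Lam) : Lam := Ns.foldl app M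

/-- All free variables are `< d`. -/
def ClosedAt (d : ℕ) : Lam → Prop
  | var n => n < d
  | lam M => ClosedAt (d + 1) M
  | app P Q => ClosedAt d P ∧ ClosedAt d Q

/-- `M` is head-normalizable: it β-reduces in finitely many steps to a head-normal form. -/
def HeadNormalizable (M : Lam) : Prop :=
  ∃ N, Relation.ReflTransGen Beta M N ∧ isHNF N

/-- `M` is a β-normal form: it contains no β-redex, i.e. admits no β-step. -/
def BetaNF (M : Lam) : Prop := ¬∃ N, Beta M N

/-- `M` is β-normalizable: it β-reduces in finitely many steps to a β-normal form. -/
def BetaNormalizable (M : Lam) : Prop :=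
  ∃ N, Relation.ReflTransGen Beta M N ∧ BetaNF N

/-- `M` is strongly β-normalizable: no infinite β-reduction sequence starts from `M`. -/
def StronglyNormalizable (M : Lam) : Prop := Acc (fun N M' => Beta M' N) M

end Lam

/-! Rigid resource terms (the nonzero ones), in de Bruijn notation:
`a ::= x | λx.a | ⟨c⟩d⃗` with `d⃗` a list of rigid terms.
The term `0` is represented by `none : Option Rig`. -/
inductive Rig : Type
  | var : ℕ → Rig
  | lam : Rig → Rig
  | app : Rig → List Rig → Rig

namespace Rig

mutual
/-- Number of free occurrences of the variable `k` in a rigid term. -/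
def countR (k : ℕ) : Rig → ℕ
  | var n => if n = k then 1 else 0
  | lam a => countR (k + 1) a
  | app c ds => countR k c + countRList k ds
termination_by a => sizeOf a

def countRList (k : ℕ) : List Rig → ℕ
  | [] => 0
  | d :: ds => countR k d + countRList k ds
termination_by ds => sizeOf ds
end

mutual
/-- Shift the free indices `≥ d` up by one. -/
def liftR (d : ℕ) : Rig → Rig
  | var n => if n < d then var n else var (n + 1)
  | lam a => lam (liftR (d + 1) a)
  | app c ds => app (liftR d c) (liftRList d ds)
termination_by a => sizeOf a

def liftRList (d : ℕ) : List Rig → List Rig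
  | [] => []
  | a :: as => liftR d a :: liftRList d as
termination_by as => sizeOf as
end

mutual
/-- Rigid substitution `a[b⃗/k]`: the list `b⃗` is distributed, in order, over the
free occurrences of the variable `k`; the result is `none` (i.e. `0`) when
`|b⃗| ≠ n_k(a)`. -/
def rsubst (k : ℕ) : Rig → List Rig → Option Rig
  | var n, bs =>
      if n = k then (match bs with | [b] => some b | _ => none)
      else (match bs with
            | [] => some (if k < n then var (n - 1) else var n)
            | _ => none)
  | lam a, bs => (rsubst (k + 1) a (liftRList 0 bs)).map lam
  | app c ds, bs =>
      match rsubst k c (bs.take (countR k c)), rsubstList k ds (bs.drop (countR k c)) with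
      | some c', some ds' => some (app c' ds')
      | _, _ => none
termination_by a _ => sizeOf a

def rsubstList (k : ℕ) : List Rig → List Rig → Option (List Rig)
  | [], bs => if bs.isEmpty then some [] else none
  | d :: ds, bs =>
      match rsubst k d (bs.take (countR k d)), rsubstList k ds (bs.drop (countR k d)) with
      | some d', some ds' => some (d' :: ds')
      | _, _ => none
termination_by ds _ => sizeOf ds
end

/-- One-step rigid resource reduction `→_r` (contextual closure of
`⟨λx.a⟩b⃗ →_r a[b⃗/x]`); the result may be `0` (i.e. `none`), which annihilates
the surrounding context. -/
inductive RStep : Rig → Option Rig → Prop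
  | beta (a : Rig) (bs : List Rig) : RStep (app (lam a) bs) (rsubst 0 a bs)
  | lam {a r} : RStep a r → RStep (lam a) (r.map lam)
  | head {c r} (ds : List Rig) : RStep c r → RStep (app c ds) (r.map (fun c' => app c' ds))
  | arg {d r} (c : Rig) (ds₁ ds₂ : List Rig) :
      RStep d r → RStep (app c (ds₁ ++ d :: ds₂)) (r.map (fun d' => app c (ds₁ ++ d' :: ds₂)))

/-- `→_r` on rigid terms extended with `0`; `0` is inert. -/
inductive RStepO : Option Rig → Option Rig → Prop
  | mk {a r} : RStep a r → RStepO (some a) r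

/-- `r` is a `→_r`-normal form (`0` is one). -/
def RNormal (r : Option Rig) : Prop := ¬∃ r', RStepO r r'

/-- The head of the application spine is a variable, with no λ on the spine. -/
def rNeutral : Rig → Bool
  | var _ => true
  | lam _ => false
  | app c _ => rNeutral c

/-- Rigid head-normal forms among nonzero terms: `λx₁…λxₘ.⟨…⟨x⟩d⃗₁…⟩d⃗ₙ`
(the term `0` is a head-normal form, but it is treated separately). -/
def rIsHNF : Rig → Prop
  | var _ => True
  | lam a => rIsHNF a
  | app c _ => rNeutral c = true

/-- The rigid head-reduction function `H_r`: contracts the head redex, identity on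
head-normal forms; the result may be `0` (i.e. `none`). -/
def Hr : Rig → Option Rig
  | var n => some (var n)
  | lam a => (Hr a).map lam
  | app (lam a) bs => rsubst 0 a bs
  | app (var n) ds => some (app (var n) ds)
  | app (app c₁ c₂) ds => (Hr (app c₁ c₂)).map (fun c' => app c' ds)

/-- `H_r` extended to terms-or-`0`. -/
def HrO : Option Rig → Option Rig := fun r => r.bind Hr

mutual
/-- The rigid left-parallel reduction function `L_r`: identity on `→_r`-normal forms,
applied componentwise to the argument lists on head-normal forms, contraction of the
head redex otherwise; the result may be `0` (i.e. `none`). -/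
def Lr : Rig → Option Rig
  | var n => some (var n)
  | lam a => (Lr a).map lam
  | app (lam a) bs => rsubst 0 a bs
  | app (var n) ds => (LrList ds).map (fun ds' => app (var n) ds')
  | app (app c₁ c₂) ds =>
      if rNeutral (app c₁ c₂) then
        match Lr (app c₁ c₂), LrList ds with
        | some c', some ds' => some (app c' ds')
        | _, _ => none
      else (Lr (app c₁ c₂)).map (fun c' => app c' ds)
termination_by a => sizeOf a

def LrList : List Rig → Option (List Rig)
  | [] => some []
  | d :: ds =>
      match Lr d, LrList ds with
      | some d', some ds' => some (d' :: ds')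
      | _, _ => none
termination_by ds => sizeOf ds
end

/-- `L_r` extended to terms-or-`0`. -/
def LrO : Option Rig → Option Rig := fun r => r.bind Lr

/-- Positive resource terms: no empty list/multiset occurs as the argument of an
application. -/
inductive rPositive : Rig → Prop
  | var (n : ℕ) : rPositive (var n)
  | lam {a} : rPositive a → rPositive (lam a)
  | app {c : Rig} {ds : List Rig} :
      rPositive c → ds ≠ [] → (∀ d ∈ ds, rPositive d) → rPositive (app c ds)

end Rig

/-- The rigid expansion `T_r(M)` of a λ-term (equivalently, the support of its Taylor
expansion, with multisets presented by lists: `Texp M` is closed under permutation of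
argument lists). -/
def Texp : Lam → Set Rig
  | Lam.var n => {Rig.var n}
  | Lam.lam M => {a | ∃ b ∈ Texp M, a = Rig.lam b}
  | Lam.app P Q => {a | ∃ c ∈ Texp P, ∃ ds : List Rig, (∀ d ∈ ds, d ∈ Texp Q) ∧ a = Rig.app c ds}

namespace Rig

/-- The support of the `n`-linear substitution `∂_k a · b̄`, where the multiset `b̄` is
presented by the list `bs`: the finite formal sum (multiset) of all nonzero results of
rigid substitutions along bijective assignments, i.e. permutations of `bs`. -/
def permSubst (k : ℕ) (a : Rig) (bs : List Rig) : Multiset Rig :=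
  ↑(bs.permutations.filterMap (fun bs' => rsubst k a bs'))

/-- One step of non-erasing ε-resource reduction `→^{¬e}_{∂ε}` out of a single resource
term, producing a finite formal sum (a multiset) of resource terms: non-erasing resource
β-steps `⟨λx.a⟩b̄ → ∂_x a · b̄` (with `x ∈ FV(a)`) and resource σ₁-steps, under any
context. -/
inductive NEStep : Rig → Multiset Rig → Prop
  | beta {a : Rig} (bs : List Rig) :
      0 < countR 0 a → NEStep (app (lam a) bs) (permSubst 0 a bs)
  | sigma (a : Rig) (ts qs : List Rig) :
      NEStep (app (app (lam a) ts) qs) {app (lam (app a (liftRList 0 qs))) ts}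
  | lam {a σ} : NEStep a σ → NEStep (lam a) (σ.map lam)
  | head {c σ} (ds : List Rig) : NEStep c σ → NEStep (app c ds) (σ.map (fun c' => app c' ds))
  | arg {d σ} (c : Rig) (ds₁ ds₂ : List Rig) :
      NEStep d σ → NEStep (app c (ds₁ ++ d :: ds₂)) (σ.map (fun d' => app c (ds₁ ++ d' :: ds₂)))

/-- Non-erasing ε-resource reduction on finite formal sums, extended by linearity. -/
def NEStepSum (σ τ : Multiset Rig) : Prop :=
  ∃ (a : Rig) (ρ υ : Multiset Rig), σ = a ::ₘ ρ ∧ NEStep a υ ∧ τ = υ + ρ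

/-- `σ` is a `→^{¬e}_{∂ε}`-normal form. -/
def NENormal (σ : Multiset Rig) : Prop := ¬∃ τ, NEStepSum σ τ

end Rig

/-- One step of non-erasing ε-reduction on λ-terms: non-erasing β-steps
`(λx.M)N → M[N/x]` (with `x ∈ FV(M)`) together with σ₁-steps
`((λx.M)N)P → (λx.MP)N` (`x ∉ FV(P)`), under any context. -/
inductive NEeps : Lam → Lam → Prop
  | beta {M : Lam} (N : Lam) :
      0 < Lam.count 0 M → NEeps (Lam.app (Lam.lam M) N) (Lam.subst M 0 N)
  | sigma (M N P : Lam) :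
      NEeps (Lam.app (Lam.app (Lam.lam M) N) P)
        (Lam.app (Lam.lam (Lam.app M (Lam.lift 0 P))) N)
  | lam {M M'} : NEeps M M' → NEeps (Lam.lam M) (Lam.lam M')
  | appL {P P' Q} : NEeps P P' → NEeps (Lam.app P Q) (Lam.app P' Q)
  | appR {P Q Q'} : NEeps Q Q' → NEeps (Lam.app P Q) (Lam.app P Q')

/-- The set `S` of λ-terms. -/
inductive SLam : Lam → Prop
  | varApp (n : ℕ) (Ms : List Lam) :
      (∀ M ∈ Ms, SLam M) → SLam (Lam.mkApps (Lam.var n) Ms)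
  | lam {M} : SLam M → SLam (Lam.lam M)
  | redex (M₀ M₁ : Lam) (Ms : List Lam) :
      SLam M₁ → SLam (Lam.mkApps (Lam.subst M₀ 0 M₁) Ms) →
      SLam (Lam.mkApps (Lam.app (Lam.lam M₀) M₁) Ms)

/-- λI-terms: every abstraction binds a variable occurring free in its body. -/
def LamI : Lam → Prop
  | Lam.var _ => True
  | Lam.lam M => LamI M ∧ 0 < Lam.count 0 M
  | Lam.app P Q => LamI P ∧ LamI Q

/-!
Rigid expansion commutes with substitution: every element of `T_r(M[N/x])` is `a[b⃗/x]` for some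
`a ∈ T_r(M)` and some list `b⃗` of elements of `T_r(N)`. Hence if `M →_β M'`, every `a' ∈ T_r(M')`
is a rigid reduct of some `a ∈ T_r(M)`: for a redex contracted inside the argument of an
application, the corresponding argument list in `a'` is pulled back element by element. Finally, the
expansion of a head-normal form contains a nonzero normal term, obtained by emptying every argument
list on the head spine, and it can be pulled back along any reduction to that head-normal form.
-/

section Lists

variable {α β : Type*} {R : α → β → Prop} {s : Set α}

theorem exists_forall₂_of_forall_mem_exists {bs : List β} (h : ∀ b ∈ bs, ∃ a ∈ s, R a b) :
    ∃ as : List α, (∀ a ∈ as, a ∈ s) ∧ List.Forall₂ R as bs := by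
  induction bs with
  | nil => exact ⟨[], List.forall_mem_nil _, .nil⟩
  | cons b bs ih =>
    obtain ⟨⟨a, ha, hab⟩, hbs⟩ := List.forall_mem_cons.1 h
    obtain ⟨as, has, hR⟩ := ih hbs
    exact ⟨a :: as, List.forall_mem_cons.2 ⟨ha, has⟩, .cons hab hR⟩

theorem image_list_map (f : α → β) (s : Set α) :
    List.map f '' {as | ∀ a ∈ as, a ∈ s} = {bs | ∀ b ∈ bs, b ∈ f '' s} := by
  ext bs
  constructor
  · rintro ⟨as, has, rfl⟩
    exact List.forall_mem_map.2 fun a ha => Set.mem_image_of_mem f (has a ha)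
  · intro h
    obtain ⟨as, has, hmap⟩ := exists_forall₂_of_forall_mem_exists (R := fun a b => f a = b) h
    exact ⟨as, has, List.forall₂_eq_eq_eq ▸ List.forall₂_map_left_iff.2 hmap⟩

end Lists

namespace Rig

open Relation (ReflTransGen)

theorem liftRList_eq_map (d : ℕ) (as : List Rig) : liftRList d as = as.map (liftR d) := by
  induction as with
  | nil => rw [liftRList, List.map_nil]
  | cons a as ih => rw [liftRList, ih, List.map_cons]

/-- `RSubstFrom k s a a'` says that `a' = a[b⃗/k] ≠ 0` for some list `b⃗` of elements of `s`. The
length of `b⃗` is recorded so that such lists can be concatenated along an application. -/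
def RSubstFrom (k : ℕ) (s : Set Rig) (a a' : Rig) : Prop :=
  ∃ bs : List Rig, (∀ b ∈ bs, b ∈ s) ∧ bs.length = countR k a ∧ rsubst k a bs = some a'

namespace RSubstFrom

variable {k n : ℕ} {s : Set Rig} {a a' b c c' : Rig} {ds ds' : List Rig}

theorem var_self (hb : b ∈ s) : RSubstFrom k s (.var k) b :=
  ⟨[b], List.forall_mem_singleton.2 hb, by simp [countR], by simp [rsubst]⟩

theorem var_of_ne (h : n ≠ k) :
    RSubstFrom k s (.var n) (if k < n then .var (n - 1) else .var n) :=
  ⟨[], List.forall_mem_nil _, by simp [countR, h], by simp [rsubst, h]⟩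

theorem lam (h : RSubstFrom (k + 1) (liftR 0 '' s) a a') :
    RSubstFrom k s (.lam a) (.lam a') := by
  obtain ⟨bs, hbs, hlen, hsubst⟩ := h
  obtain ⟨bs, hmem, rfl⟩ := (image_list_map (liftR 0) s).superset hbs
  rw [List.length_map] at hlen
  exact ⟨bs, hmem, by rw [countR, hlen],
    by rw [rsubst, liftRList_eq_map, hsubst, Option.map_some]⟩

theorem exists_rsubstList (h : List.Forall₂ (RSubstFrom k s) ds ds') :
    ∃ bs : List Rig, (∀ b ∈ bs, b ∈ s) ∧ bs.length = countRList k ds ∧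
      rsubstList k ds bs = some ds' := by
  induction h with
  | nil => exact ⟨[], List.forall_mem_nil _, by simp [countRList], by simp [rsubstList]⟩
  | cons hd _ ih =>
    obtain ⟨bs, hbs, hlen, hsubst⟩ := hd
    obtain ⟨bs', hbs', hlen', hsubst'⟩ := ih
    exact ⟨bs ++ bs', List.forall_mem_append.2 ⟨hbs, hbs'⟩,
      by rw [List.length_append, countRList, hlen, hlen'],
      by rw [rsubstList, ← hlen, List.take_left, List.drop_left, hsubst, hsubst']⟩

theorem app (hc : RSubstFrom k s c c') (hds : List.Forall₂ (RSubstFrom k s) ds ds') :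
    RSubstFrom k s (.app c ds) (.app c' ds') := by
  obtain ⟨bs, hbs, hlen, hsubst⟩ := hc
  obtain ⟨bs', hbs', hlen', hsubst'⟩ := exists_rsubstList hds
  exact ⟨bs ++ bs', List.forall_mem_append.2 ⟨hbs, hbs'⟩,
    by rw [List.length_append, countR, hlen, hlen'],
    by rw [rsubst, ← hlen, List.take_left, List.drop_left, hsubst, hsubst']⟩

end RSubstFrom

section Reduction

variable {a b c c' : Rig} {as bs : List Rig}

theorem reduces_lam (h : ReflTransGen RStepO (some a) (some b)) :
    ReflTransGen RStepO (some (lam a)) (some (lam b)) :=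
  h.lift (Option.map lam) fun _ _ ⟨hstep⟩ => ⟨hstep.lam⟩

theorem reduces_app_head (ds : List Rig) (h : ReflTransGen RStepO (some c) (some c')) :
    ReflTransGen RStepO (some (app c ds)) (some (app c' ds)) :=
  h.lift (Option.map (app · ds)) fun _ _ ⟨hstep⟩ => ⟨hstep.head ds⟩

theorem reduces_app_arg (c : Rig) (ds₁ ds₂ : List Rig)
    (h : ReflTransGen RStepO (some a) (some b)) :
    ReflTransGen RStepO (some (app c (ds₁ ++ a :: ds₂))) (some (app c (ds₁ ++ b :: ds₂))) :=
  h.lift (Option.map fun d => app c (ds₁ ++ d :: ds₂)) fun _ _ ⟨hstep⟩ => ⟨hstep.arg c ds₁ ds₂⟩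

theorem reduces_app_append (c : Rig) (ds : List Rig)
    (h : List.Forall₂ (fun a b => ReflTransGen RStepO (some a) (some b)) as bs) :
    ReflTransGen RStepO (some (app c (ds ++ as))) (some (app c (ds ++ bs))) := by
  induction h generalizing ds with
  | nil => exact .refl
  | @cons a b as bs hab _ ih =>
    have htail : ReflTransGen RStepO (some (app c (ds ++ b :: as)))
        (some (app c (ds ++ b :: bs))) := by
      simpa only [List.append_assoc, List.singleton_append] using ih (ds ++ [b])
    exact (reduces_app_arg c ds as hab).trans htail

end Reduction

section Normal

variable {a c : Rig} {ds : List Rig}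

theorem rNormal_some_iff : RNormal (some a) ↔ ∀ r, ¬RStep a r :=
  ⟨fun h r hstep => h ⟨r, ⟨hstep⟩⟩, fun h ⟨r, ⟨hstep⟩⟩ => h r hstep⟩

theorem rNormal_var (n : ℕ) : RNormal (some (var n)) :=
  rNormal_some_iff.2 nofun

theorem RNormal.lam (h : RNormal (some a)) : RNormal (some (lam a)) := by
  rw [rNormal_some_iff] at h ⊢
  rintro _ (_ | hstep)
  exact h _ hstep

theorem RNormal.app (hc : RNormal (some c)) (hneutral : rNeutral c = true)
    (hds : ∀ d ∈ ds, RNormal (some d)) : RNormal (some (app c ds)) := by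
  simp only [rNormal_some_iff] at hc hds ⊢
  intro r hstep
  cases hstep with
  | beta => exact Bool.false_ne_true hneutral
  | head _ hstep => exact hc _ hstep
  | arg _ ds₁ ds₂ hstep => exact hds _ (by simp) _ hstep

end Normal

end Rig

section Expansion

open Relation (ReflTransGen)

theorem texp_lam (M : Lam) : Texp (.lam M) = Rig.lam '' Texp M := by
  ext a
  simp only [Texp, Set.mem_ofPred_eq, Set.mem_image, eq_comm]

theorem texp_app (P Q : Lam) :
    Texp (.app P Q) = Set.image2 Rig.app (Texp P) {ds | ∀ d ∈ ds, d ∈ Texp Q} := by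
  ext a
  simp only [Texp, Set.mem_ofPred_eq, Set.mem_image2, eq_comm]

theorem texp_lift (d : ℕ) (N : Lam) : Texp (N.lift d) = Rig.liftR d '' Texp N := by
  induction N generalizing d with
  | var n =>
    rw [Texp, Set.image_singleton, Rig.liftR, Lam.lift]
    split_ifs <;> rw [Texp]
  | lam M ih =>
    simp only [Lam.lift, texp_lam, ih, Set.image_image, Rig.liftR]
  | app P Q ihP ihQ =>
    rw [Lam.lift, texp_app, texp_app, ihP, ihQ, ← image_list_map, Set.image2_image_left,
      Set.image2_image_right, Set.image_image2]
    simp only [Rig.liftR, Rig.liftRList_eq_map]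

theorem exists_mem_texp_rsubstFrom {M N : Lam} {k : ℕ} {a' : Rig} (h : a' ∈ Texp (M.subst k N)) :
    ∃ a ∈ Texp M, Rig.RSubstFrom k (Texp N) a a' := by
  induction M generalizing k N a' with
  | var n =>
    refine ⟨.var n, rfl, ?_⟩
    rw [Lam.subst] at h
    by_cases hn : n = k
    · subst hn
      rw [if_pos rfl] at h
      exact .var_self h
    · obtain rfl : a' = if k < n then .var (n - 1) else .var n := by
        rw [if_neg hn] at h
        split_ifs at h ⊢ <;> exact h
      exact .var_of_ne hn
  | lam M ih =>
    rw [Lam.subst, texp_lam] at h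
    obtain ⟨c', hc', rfl⟩ := h
    obtain ⟨c, hc, hsubst⟩ := ih hc'
    rw [texp_lift] at hsubst
    exact ⟨.lam c, ⟨c, hc, rfl⟩, hsubst.lam⟩
  | app P Q ihP ihQ =>
    rw [Lam.subst, texp_app] at h
    obtain ⟨c', hc', ds', hds', rfl⟩ := h
    obtain ⟨c, hc, hcsubst⟩ := ihP hc'
    obtain ⟨ds, hds, hdsubst⟩ :=
      exists_forall₂_of_forall_mem_exists fun d' hd' => ihQ (hds' d' hd')
    exact ⟨.app c ds, ⟨c, hc, ds, hds, rfl⟩, hcsubst.app hdsubst⟩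

theorem exists_mem_texp_reduces_of_beta {M M' : Lam} (h : Lam.Beta M M') {a' : Rig}
    (ha' : a' ∈ Texp M') : ∃ a ∈ Texp M, ReflTransGen Rig.RStepO (some a) (some a') := by
  induction h generalizing a' with
  | beta M N =>
    obtain ⟨a, ha, bs, hbs, -, hsubst⟩ := exists_mem_texp_rsubstFrom ha'
    exact ⟨.app (.lam a) bs, ⟨.lam a, ⟨a, ha, rfl⟩, bs, hbs, rfl⟩,
      .single ⟨hsubst ▸ .beta a bs⟩⟩
  | lam _ ih =>
    obtain ⟨b', hb', rfl⟩ := ha'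
    obtain ⟨b, hb, hred⟩ := ih hb'
    exact ⟨.lam b, ⟨b, hb, rfl⟩, Rig.reduces_lam hred⟩
  | appL _ ih =>
    obtain ⟨c', hc', ds, hds, rfl⟩ := ha'
    obtain ⟨c, hc, hred⟩ := ih hc'
    exact ⟨.app c ds, ⟨c, hc, ds, hds, rfl⟩, Rig.reduces_app_head ds hred⟩
  | appR _ ih =>
    obtain ⟨c, hc, ds', hds', rfl⟩ := ha'
    obtain ⟨ds, hds, hred⟩ := exists_forall₂_of_forall_mem_exists fun d' hd' => ih (hds' d' hd')
    exact ⟨.app c ds, ⟨c, hc, ds, hds, rfl⟩, Rig.reduces_app_append c [] hred⟩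

theorem exists_mem_texp_reduces_of_reflTransGen_beta {M M' : Lam}
    (h : ReflTransGen Lam.Beta M M') {a' : Rig} (ha' : a' ∈ Texp M') :
    ∃ a ∈ Texp M, ReflTransGen Rig.RStepO (some a) (some a') := by
  induction h using ReflTransGen.head_induction_on with
  | refl => exact ⟨a', ha', .refl⟩
  | head hbeta _ ih =>
    obtain ⟨b, hb, hred'⟩ := ih
    obtain ⟨a, ha, hred⟩ := exists_mem_texp_reduces_of_beta hbeta hb
    exact ⟨a, ha, hred.trans hred'⟩

end Expansion

namespace Lam

/-- The element of `T_r(M)` that keeps the head spine of `M` and replaces each argument on it by the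
empty list; it serves as a nonzero normal element of the expansion of a head-normal form. -/
def spine : Lam → Rig
  | var n => .var n
  | lam M => .lam M.spine
  | app P _ => .app P.spine []

theorem spine_mem_texp (M : Lam) : M.spine ∈ Texp M := by
  induction M with
  | var n => exact rfl
  | lam M ih => exact ⟨M.spine, ih, rfl⟩
  | app P Q ih _ => exact ⟨P.spine, ih, [], List.forall_mem_nil _, rfl⟩

theorem rNeutral_spine (M : Lam) : M.spine.rNeutral = M.neutral := by
  induction M with
  | var n => rfl
  | lam M => rfl
  | app _ _ ih _ => exact ih

theorem rNormal_spine_of_neutral {M : Lam} (h : M.neutral = true) :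
    Rig.RNormal (some M.spine) := by
  induction M with
  | var n => exact Rig.rNormal_var n
  | lam M => exact absurd h Bool.false_ne_true
  | app P Q ih _ => exact (ih h).app (P.rNeutral_spine.trans h) (List.forall_mem_nil _)

theorem rNormal_spine_of_isHNF {M : Lam} (h : M.isHNF) : Rig.RNormal (some M.spine) := by
  induction M with
  | var n => exact Rig.rNormal_var n
  | lam M ih => exact (ih h).lam
  | app _ _ => exact rNormal_spine_of_neutral (M := app _ _) h

end Lam

/-- if `M` is head-normalizable then some `a ∈ T_r(M)` has `NF(a) ≠ 0`,
i.e. `a` `→_r`-reduces to a normal form that is a (nonzero) rigid term. -/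
theorem nonzero_NF_of_head_normalizable {M : Lam} (h : Lam.HeadNormalizable M) :
    ∃ a ∈ Texp M, ∃ b : Rig,
      Relation.ReflTransGen Rig.RStepO (some a) (some b) ∧ Rig.RNormal (some b) := by
  obtain ⟨N, hMN, hN⟩ := h
  obtain ⟨a, ha, hred⟩ := exists_mem_texp_reduces_of_reflTransGen_beta hMN N.spine_mem_texp
  exact ⟨a, ha, N.spine, hred, Lam.rNormal_spine_of_isHNF hN⟩
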